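/- Let Γ be a finite connected simple graph with r+1 vertices, where r+1 ≥ 3, and with n edges, where n ≥ 3, and let F_Γ be its Kirchhoff polynomial. Then for every spanning tree T of Γ, for every point a in the cone C^n_{T>0} = { a ∈ ℝ^n_{≥0} : a_e > 0 for all e ∈ T }, and for every real number s > (r−1)/r, the symmetric n×n matrix (−F_Γ·H_{F_Γ} + s·(∇F_Γ)ᵀ(∇F_Γ)) evaluated at a is positive definite. -/

import Mathlib

/-!
By the weighted matrix-tree theorem `F_Γ(x) = det L(x)`, where `L(x)` is the Laplacian with edge
weights `x`, reduced at a root. It is linear in `x`, and injective because `Γ` is simple. At a point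
`a` of the cone `L(a)` is positive semidefinite of determinant `F_Γ(a) > 0`, so `L(a) = Bᵀ B` with
`B` invertible. For a direction `v ≠ 0` write `L(v) = Bᵀ A B` with `A ≠ 0` symmetric; then
`F_Γ(a + t v) = F_Γ(a) det (1 + t A) = F_Γ(a) (1 + t tr A + t² ((tr A)² - tr A²) / 2 + ⋯)`.

Comparing Taylor coefficients, the quadratic form in question takes the value
`F_Γ(a)² (tr A² - (1 - s) (tr A)²)` at `v`. This is positive because `(tr A)² ≤ r tr A²` by
Cauchy–Schwarz and `(1 - s) r < 1`.
-/

open MvPolynomial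

/-- A spanning tree of a graph `G`, given as a set `T` of edges of `G` with `|V| - 1` edges
whose spanning subgraph is connected. -/
def IsSpanningTree {V : Type} [Fintype V] [DecidableEq V] (G : SimpleGraph V)
    (T : Finset G.edgeSet) : Prop :=
  T.card = Fintype.card V - 1 ∧
    (SimpleGraph.fromEdgeSet (Subtype.val '' (T : Set G.edgeSet))).Connected

open scoped Classical in
/-- The Kirchhoff polynomial of a graph. -/
noncomputable def kirchhoff {V : Type} [Fintype V] [DecidableEq V] (G : SimpleGraph V)
    [Fintype G.edgeSet] : MvPolynomial G.edgeSet ℝ :=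
  ∑ T : Finset G.edgeSet, if IsSpanningTree G T then ∏ e ∈ T, X e else 0

open scoped Matrix

section Minors

theorem exists_perm_comp_eq_of_image_eq {m E : Type*} [Fintype m] [DecidableEq E] {S : Finset E}
    (ε : m ≃ S) {f : m → E} (hf : Finset.univ.image f = S) :
    ∃ σ : Equiv.Perm m, (fun i => (ε (σ i) : E)) = f := by
  have hmem (i : m) : f i ∈ S := hf ▸ Finset.mem_image_of_mem f (Finset.mem_univ i)
  have hsurj : Function.Surjective fun i => ε.symm ⟨f i, hmem i⟩ := by
    refine ε.symm.surjective.comp fun ⟨e, he⟩ => ?_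
    obtain ⟨i, -, rfl⟩ := Finset.mem_image.1 (hf ▸ he)
    exact ⟨i, rfl⟩
  exact ⟨Equiv.ofBijective _ hsurj.bijective_of_finite, by ext; simp⟩

variable {m E R : Type*} [Fintype m] [DecidableEq m] [CommRing R]

open scoped Classical in
/-- The minor of `A` on the columns in `S` and all the rows. It is `0` if `S` does not have as many
elements as there are rows. Its sign depends on a choice of enumeration of `S`, which is the same
for all matrices, so that the product of the minors of two matrices on `S` is canonical. -/
noncomputable def maximalMinor (A : Matrix m E R) (S : Finset E) : R :=
  if h : Nonempty (m ≃ S) then (A.submatrix id fun i => (h.some i : E)).det else 0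

theorem maximalMinor_map {R' : Type*} [CommRing R'] (f : R →+* R') (A : Matrix m E R)
    (S : Finset E) : maximalMinor (A.map f) S = f (maximalMinor A S) := by
  unfold maximalMinor
  split_ifs
  · exact (f.map_det _).symm
  · exact (map_zero f).symm

theorem maximalMinor_mul_diagonal [Fintype E] [DecidableEq E] (A : Matrix m E R) (x : E → R)
    (S : Finset E) :
    maximalMinor (A * Matrix.diagonal x) S = maximalMinor A S * ∏ e ∈ S, x e := by
  unfold maximalMinor
  split_ifs with h
  · have hsub : (A * Matrix.diagonal x).submatrix id (fun i => (h.some i : E)) =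
        A.submatrix id (fun i => (h.some i : E)) * Matrix.diagonal fun i => x (h.some i) := by
      ext i j
      simp
    rw [hsub, Matrix.det_mul, Matrix.det_diagonal, Equiv.prod_comp h.some fun e => x e,
      Finset.prod_coe_sort]
  · rw [zero_mul]

theorem maximalMinor_ne_zero_iff [IsDomain R] (A : Matrix m E R) (S : Finset E) :
    maximalMinor A S ≠ 0 ↔
      S.card = Fintype.card m ∧ ∀ g : m → R, (∀ e ∈ S, (g ᵥ* A) e = 0) → g = 0 := by
  have hcard : S.card = Fintype.card m ↔ Nonempty (m ≃ S) := by
    rw [← Fintype.card_eq, Fintype.card_coe, eq_comm]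
  rw [hcard]
  unfold maximalMinor
  split_ifs with h
  · have hvec (g : m → R) :
        g ᵥ* A.submatrix id (fun i => (h.some i : E)) = 0 ↔ ∀ e ∈ S, (g ᵥ* A) e = 0 := by
      rw [funext_iff, h.some.forall_congr_left, Subtype.forall]
      simp [Matrix.vecMul, dotProduct]
    simp only [Ne, ← Matrix.exists_vecMul_eq_zero_iff, hvec, h, true_and, not_exists, not_and',
      not_not]
  · simp [h]

theorem det_mul_transpose_eq_sum_fun [Fintype E] (A B : Matrix m E R) :
    (A * Bᵀ).det = ∑ f : m → E, (∏ i, A i (f i)) * (B.submatrix id f).det := by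
  have hrows : A * Bᵀ = fun i => ∑ e, A i e • Bᵀ e := by
    ext i j
    simp [Matrix.mul_apply]
  calc (A * Bᵀ).det = Matrix.detRowAlternating.toMultilinearMap fun i => ∑ e, A i e • Bᵀ e := by
        rw [hrows]; rfl
    _ = ∑ f : m → E, (∏ i, A i (f i)) * (Bᵀ.submatrix f id).det := by
        classical
        rw [MultilinearMap.map_sum]
        exact Finset.sum_congr rfl fun f _ => MultilinearMap.map_smul_univ _ _ _
    _ = _ := by simp only [← Matrix.transpose_submatrix, Matrix.det_transpose]

theorem sum_image_eq_maximalMinor_mul_maximalMinor [Fintype E] [DecidableEq E]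
    (A B : Matrix m E R) (S : Finset E) :
    ∑ f : m → E with Finset.univ.image f = S, (∏ i, A i (f i)) * (B.submatrix id f).det =
      maximalMinor A S * maximalMinor B S := by
  unfold maximalMinor
  split_ifs with h
  · set ε := h.some
    calc _ = ∑ σ : Equiv.Perm m,
          (∏ i, A i (ε (σ i))) * (B.submatrix id fun i => (ε (σ i) : E)).det := by
          symm
          refine Finset.sum_nbij (fun σ i => (ε (σ i) : E)) (fun σ _ => ?_) (fun σ _ τ _ hστ => ?_)
            (fun f hf => ?_) fun _ _ => rfl
          · have : (fun i => (ε (σ i) : E)) = Subtype.val ∘ (σ.trans ε) := rfl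
            simp [this, ← Finset.image_image, Finset.image_univ_equiv, Finset.univ_eq_attach]
          · ext1 i
            exact ε.injective (Subtype.ext (congrFun hστ i))
          · obtain ⟨σ, hσ⟩ := exists_perm_comp_eq_of_image_eq ε (Finset.mem_filter.1 hf).2
            exact ⟨σ, Finset.mem_coe.2 (Finset.mem_univ σ), hσ⟩
      _ = ∑ σ : Equiv.Perm m, (Equiv.Perm.sign σ * ∏ i, A i (ε (σ i))) *
          (B.submatrix id fun i => (ε i : E)).det := by
          refine Finset.sum_congr rfl fun σ _ => ?_
          have hperm := Matrix.det_permute' σ (B.submatrix id fun i => (ε i : E))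
          rw [Matrix.submatrix_submatrix] at hperm
          rw [mul_right_comm, ← hperm, mul_comm]
          rfl
      _ = _ := by
          rw [← Finset.sum_mul, ← Matrix.det_transpose (A.submatrix _ _),
            Matrix.det_apply' (A.submatrix _ _)ᵀ]
          rfl
  · refine (Finset.sum_eq_zero fun f hf => ?_).trans (zero_mul 0).symm
    have hninj : ¬ Function.Injective f := fun hinj => h ⟨(Equiv.ofInjective f hinj).trans
      (Equiv.setCongr (by simp [← (Finset.mem_filter.1 hf).2]))⟩
    obtain ⟨i, j, hij, hne⟩ := Function.not_injective_iff.1 hninj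
    rw [Matrix.det_zero_of_column_eq hne fun k => by simp [hij], mul_zero]

theorem det_mul_transpose_eq_sum_maximalMinor [Fintype E] (A B : Matrix m E R) :
    (A * Bᵀ).det = ∑ S, maximalMinor A S * maximalMinor B S := by
  classical
  rw [det_mul_transpose_eq_sum_fun,
    ← Finset.sum_fiberwise (s := Finset.univ) (g := fun f : m → E => Finset.univ.image f)]
  exact Finset.sum_congr rfl fun S _ => sum_image_eq_maximalMinor_mul_maximalMinor A B S

end Minors

section IncidenceMatrix

theorem connected_iff_forall_adj_eq_imp {V R : Type*} [Zero R] [Nontrivial R]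
    (H : SimpleGraph V) (v₀ : V) :
    H.Connected ↔ ∀ g : V → R, (∀ u v, H.Adj u v → g u = g v) → g v₀ = 0 → g = 0 := by
  classical
  refine ⟨fun hH g hg h0 => funext fun v => ?_, fun h => ?_⟩
  · have hreach := (SimpleGraph.reachable_iff_reflTransGen v₀ v).1 (hH.preconnected v₀ v)
    induction hreach with
    | refl => exact h0
    | tail _ huv ih => exact (hg _ _ huv).symm.trans ih
  · obtain ⟨c, hc⟩ := exists_ne (0 : R)
    have hind : (fun v => if H.Reachable v₀ v then 0 else c) = 0 := by
      refine h _ (fun u v huv => ?_) (if_pos (SimpleGraph.Reachable.refl v₀))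
      have hiff : H.Reachable v₀ u ↔ H.Reachable v₀ v :=
        ⟨fun hu => hu.trans huv.reachable, fun hv => hv.trans huv.symm.reachable⟩
      simp only [hiff]
    have hreach (v : V) : H.Reachable v₀ v := by
      by_contra hv
      exact hc (by simpa [hv] using congrFun hind v)
    exact H.connected_iff_exists_forall_reachable.2 ⟨v₀, hreach⟩

/-- The subgraph of `G` on all its vertices whose edges are those in `S`. -/
abbrev spanningSubgraph {V : Type*} {G : SimpleGraph V} (S : Finset G.edgeSet) : SimpleGraph V :=
  SimpleGraph.fromEdgeSet (Subtype.val '' (S : Set G.edgeSet))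

/-- The coboundary of a function `g` on the vertices: its value on an edge is the difference of `g`
at the endpoints, where the edge is oriented by its representative `Quot.out`. -/
noncomputable def coboundary {V R : Type*} [Ring R] (G : SimpleGraph V) (g : V → R)
    (e : G.edgeSet) : R :=
  g e.1.out.1 - g e.1.out.2

variable {V R : Type*} {G : SimpleGraph V}

theorem mk_out_eq (e : G.edgeSet) : s(e.1.out.1, e.1.out.2) = e.1 := Quot.out_eq e.1

theorem out_fst_ne_out_snd (e : G.edgeSet) : e.1.out.1 ≠ e.1.out.2 :=
  ((G.mem_edgeSet).1 ((mk_out_eq e).symm ▸ e.2)).ne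

theorem forall_coboundary_eq_zero_iff [Ring R] (S : Finset G.edgeSet) (g : V → R) :
    (∀ e ∈ S, coboundary G g e = 0) ↔ ∀ u v, (spanningSubgraph S).Adj u v → g u = g v := by
  simp only [SimpleGraph.fromEdgeSet_adj, coboundary, sub_eq_zero]
  refine ⟨fun h u v ⟨⟨e, he, heq⟩, _⟩ => ?_, fun h e he =>
    h _ _ ⟨⟨e, he, (mk_out_eq e).symm⟩, out_fst_ne_out_snd e⟩⟩
  rcases Sym2.eq_iff.1 ((mk_out_eq e).trans heq) with ⟨rfl, rfl⟩ | ⟨rfl, rfl⟩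
  exacts [h e he, (h e he).symm]

theorem coboundary_single_mul_coboundary_single [Ring R] [DecidableEq V] (e e' : G.edgeSet) :
    coboundary G (Pi.single e.1.out.1 1) e' * coboundary G (Pi.single e.1.out.2 1) e' =
      if e' = e then (-1 : R) else 0 := by
  have he := out_fst_ne_out_snd e
  have he' := out_fst_ne_out_snd e'
  split_ifs with h
  · subst h
    simp [coboundary, he, he.symm]
  · have hne : s(e'.1.out.1, e'.1.out.2) ≠ s(e.1.out.1, e.1.out.2) := by
      rwa [mk_out_eq, mk_out_eq, Ne, SetCoe.ext_iff]
    rw [Ne, Sym2.eq_iff] at hne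
    simp only [coboundary, Pi.single_apply]
    split_ifs <;> simp_all

/-- The oriented incidence matrix of `G` with the row of the root `v₀` deleted. -/
noncomputable def reducedIncidence (R : Type*) [Ring R] [DecidableEq V] (G : SimpleGraph V)
    (v₀ : V) : Matrix {v // v ≠ v₀} G.edgeSet R :=
  Matrix.of fun i => coboundary G (Pi.single i.1 1)

theorem reducedIncidence_map {R' : Type*} [Ring R] [Ring R'] [DecidableEq V] (f : R →+* R')
    (v₀ : V) : (reducedIncidence R G v₀).map f = reducedIncidence R' G v₀ := by
  ext i e
  simp [reducedIncidence, coboundary, Pi.single_apply, apply_ite f]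

theorem vecMul_reducedIncidence [Ring R] [Fintype V] [DecidableEq V] (v₀ : V) (g : V → R) :
    (fun i : {v // v ≠ v₀} => g i - g v₀) ᵥ* reducedIncidence R G v₀ = coboundary G g := by
  ext e
  have hsum := Fintype.sum_eq_add_sum_subtype_ne
    (fun v => (g v - g v₀) * coboundary G (Pi.single v 1) e) v₀
  simp only [sub_self, zero_mul, zero_add] at hsum
  refine hsum.symm.trans ?_
  simp [coboundary, mul_sub, Pi.single_apply]

end IncidenceMatrix

section SpanningTrees

variable {V : Type} [Fintype V] [DecidableEq V] {G : SimpleGraph V}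

theorem maximalMinor_reducedIncidence_ne_zero_iff {R : Type*} [CommRing R] [IsDomain R] (v₀ : V)
    (S : Finset G.edgeSet) :
    maximalMinor (reducedIncidence R G v₀) S ≠ 0 ↔ IsSpanningTree G S := by
  have hcard : Fintype.card {v // v ≠ v₀} = Fintype.card V - 1 := by
    simp [Fintype.card_subtype_compl]
  rw [maximalMinor_ne_zero_iff, hcard, IsSpanningTree,
    connected_iff_forall_adj_eq_imp (R := R) _ v₀]
  refine and_congr_right' ⟨fun h g hg h0 => ?_, fun h g hg => ?_⟩
  · have hres := h (fun i => g i - g v₀) (by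
      rwa [vecMul_reducedIncidence, forall_coboundary_eq_zero_iff])
    funext v
    by_cases hv : v = v₀
    · rw [hv, h0, Pi.zero_apply]
    · simpa [h0] using congrFun hres ⟨v, hv⟩
  · let g₀ (v : V) : R := if hv : v ≠ v₀ then g ⟨v, hv⟩ else 0
    have hg₀ : (fun i : {v // v ≠ v₀} => g₀ i - g₀ v₀) = g := by
      ext i
      simp [g₀, i.2]
    rw [← hg₀, vecMul_reducedIncidence, forall_coboundary_eq_zero_iff] at hg
    rw [← hg₀, h g₀ hg (by simp [g₀])]
    exact funext fun _ => sub_self 0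

theorem maximalMinor_reducedIncidence_eq_intCast (R : Type*) [CommRing R] (v₀ : V)
    (S : Finset G.edgeSet) : maximalMinor (reducedIncidence R G v₀) S =
      (maximalMinor (reducedIncidence ℤ G v₀) S : ℤ) := by
  rw [← reducedIncidence_map (Int.castRingHom R), maximalMinor_map, eq_intCast]

theorem isUnit_of_forall_prime_intCast_ne_zero {d : ℤ}
    (h : ∀ p : ℕ, p.Prime → (d : ZMod p) ≠ 0) : IsUnit d := by
  rw [Int.isUnit_iff_natAbs_eq]
  by_contra hd
  obtain ⟨p, hp, hpd⟩ := Nat.exists_prime_and_dvd hd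
  exact h p hp ((ZMod.intCast_zmod_eq_zero_iff_dvd d p).2 (Int.natCast_dvd.2 hpd))

open scoped Classical in
/-- Over `ℤ` the minor of a spanning tree is a unit because it is nonzero modulo every prime. -/
theorem sq_maximalMinor_reducedIncidence (R : Type*) [CommRing R] (v₀ : V)
    (S : Finset G.edgeSet) :
    maximalMinor (reducedIncidence R G v₀) S ^ 2 = if IsSpanningTree G S then 1 else 0 := by
  split_ifs with hS
  · have hunit : IsUnit (maximalMinor (reducedIncidence ℤ G v₀) S) :=
      isUnit_of_forall_prime_intCast_ne_zero fun p hp => by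
        have := Fact.mk hp
        rw [← maximalMinor_reducedIncidence_eq_intCast (ZMod p)]
        exact (maximalMinor_reducedIncidence_ne_zero_iff v₀ S).2 hS
    rw [maximalMinor_reducedIncidence_eq_intCast, ← Int.cast_pow, Int.isUnit_sq hunit, Int.cast_one]
  · rw [maximalMinor_reducedIncidence_eq_intCast,
      not_not.1 (mt (maximalMinor_reducedIncidence_ne_zero_iff v₀ S).1 hS)]
    simp

end SpanningTrees

section ReducedLaplacian

/-- The Laplacian of `G` with edge weights `x`, with the row and the column of the root `v₀`
deleted, as a linear map in `x`. -/
noncomputable def reducedLaplacian {V R : Type*} [CommRing R] [DecidableEq V] (G : SimpleGraph V)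
    [Fintype G.edgeSet] (v₀ : V) :
    (G.edgeSet → R) →ₗ[R] Matrix {v // v ≠ v₀} {v // v ≠ v₀} R where
  toFun x := reducedIncidence R G v₀ * Matrix.diagonal x * (reducedIncidence R G v₀)ᵀ
  map_add' x y := by rw [← Matrix.add_mul, ← Matrix.mul_add, Matrix.diagonal_add]; rfl
  map_smul' c x := by simp [Matrix.diagonal_smul]

theorem reducedLaplacian_apply {V R : Type*} [CommRing R] [DecidableEq V] (G : SimpleGraph V)
    [Fintype G.edgeSet] (v₀ : V) (x : G.edgeSet → R) : reducedLaplacian G v₀ x =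
      reducedIncidence R G v₀ * Matrix.diagonal x * (reducedIncidence R G v₀)ᵀ :=
  rfl

theorem dotProduct_reducedLaplacian_mulVec {V R : Type*} [CommRing R] [Fintype V] [DecidableEq V]
    (G : SimpleGraph V) [Fintype G.edgeSet] (v₀ : V) (x : G.edgeSet → R) (g k : V → R) :
    (fun i : {v // v ≠ v₀} => g i - g v₀) ⬝ᵥ
        (reducedLaplacian G v₀ x *ᵥ fun i : {v // v ≠ v₀} => k i - k v₀) =
      ∑ e, x e * (coboundary G g e * coboundary G k e) := by
  rw [reducedLaplacian_apply, ← Matrix.mulVec_mulVec, Matrix.mulVec_transpose,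
    Matrix.dotProduct_mulVec, ← Matrix.vecMul_vecMul, vecMul_reducedIncidence,
    vecMul_reducedIncidence]
  simp only [dotProduct, Matrix.vecMul_diagonal]
  exact Finset.sum_congr rfl fun e _ => by ring

/-- The weight of an edge is recovered by testing against the indicators of its endpoints; no other
edge contributes because `G` is simple. -/
theorem reducedLaplacian_injective {V R : Type*} [CommRing R] [Finite V] [DecidableEq V]
    (G : SimpleGraph V) [Fintype G.edgeSet] (v₀ : V) :
    Function.Injective (reducedLaplacian (R := R) G v₀) := by
  have := Fintype.ofFinite V
  rw [injective_iff_map_eq_zero]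
  refine fun x hx => funext fun e => ?_
  have hform := dotProduct_reducedLaplacian_mulVec G v₀ x (Pi.single e.1.out.1 1)
    (Pi.single e.1.out.2 1)
  simpa [hx, coboundary_single_mul_coboundary_single] using hform

open scoped Classical in
theorem det_reducedLaplacian {V : Type} {R : Type*} [CommRing R] [Fintype V]
    [DecidableEq V] (G : SimpleGraph V) [Fintype G.edgeSet] (v₀ : V) (x : G.edgeSet → R) :
    (reducedLaplacian G v₀ x).det =
      ∑ T : Finset G.edgeSet, if IsSpanningTree G T then ∏ e ∈ T, x e else 0 := by
  rw [reducedLaplacian_apply, det_mul_transpose_eq_sum_maximalMinor]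
  refine Finset.sum_congr rfl fun T _ => ?_
  rw [maximalMinor_mul_diagonal, mul_right_comm, ← sq, sq_maximalMinor_reducedIncidence, ite_mul,
    one_mul, zero_mul]

theorem eval_kirchhoff {V : Type} [Fintype V] [DecidableEq V] (G : SimpleGraph V)
    [Fintype G.edgeSet] (v₀ : V) (x : G.edgeSet → ℝ) :
    eval x (kirchhoff G) = (reducedLaplacian G v₀ x).det := by
  rw [det_reducedLaplacian, kirchhoff, map_sum]
  exact Finset.sum_congr rfl fun T _ => by split_ifs <;> simp

theorem eval_kirchhoff_pos {V : Type} [Fintype V] [DecidableEq V] {G : SimpleGraph V}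
    [Fintype G.edgeSet] {T : Finset G.edgeSet} (hT : IsSpanningTree G T) {a : G.edgeSet → ℝ}
    (ha0 : ∀ e, 0 ≤ a e) (haT : ∀ e ∈ T, 0 < a e) : 0 < eval a (kirchhoff G) := by
  classical
  simp only [kirchhoff, map_sum, apply_ite (eval a), map_prod, eval_X, map_zero]
  refine Finset.sum_pos' (fun S _ => ?_) ⟨T, Finset.mem_univ T, ?_⟩
  · split_ifs
    exacts [Finset.prod_nonneg fun e _ => ha0 e, le_rfl]
  · rw [if_pos hT]
    exact Finset.prod_pos haT

theorem isSymm_reducedLaplacian {V R : Type*} [CommRing R] [DecidableEq V] (G : SimpleGraph V)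
    [Fintype G.edgeSet] (v₀ : V) (x : G.edgeSet → R) : (reducedLaplacian G v₀ x).IsSymm := by
  simp [Matrix.IsSymm, reducedLaplacian_apply, Matrix.mul_assoc]

theorem posSemidef_reducedLaplacian {V : Type*} [Finite V] [DecidableEq V] (G : SimpleGraph V)
    [Fintype G.edgeSet] (v₀ : V) {a : G.edgeSet → ℝ} (ha0 : ∀ e, 0 ≤ a e) :
    (reducedLaplacian G v₀ a).PosSemidef :=
  (Matrix.PosSemidef.diagonal ha0).mul_mul_conjTranspose_same (reducedIncidence ℝ G v₀)

end ReducedLaplacian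

section LineRestriction

variable {E R : Type*} [CommSemiring R]

/-- The restriction `t ↦ F (a + t v)` of a polynomial to a line. -/
noncomputable def lineRestriction (a v : E → R) : MvPolynomial E R →ₐ[R] Polynomial R :=
  aeval fun e => Polynomial.C (a e) + Polynomial.C (v e) * Polynomial.X

theorem eval_lineRestriction (a v : E → R) (F : MvPolynomial E R) (t : R) :
    (lineRestriction a v F).eval t = eval (a + t • v) F := by
  induction F using MvPolynomial.induction_on with
  | C c => simp [lineRestriction]
  | add F G hF hG => simp [hF, hG]
  | mul_X F e hF => rw [map_mul, Polynomial.eval_mul, hF]; simp [lineRestriction, mul_comm t]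

theorem derivative_lineRestriction [Fintype E] (a v : E → R) (F : MvPolynomial E R) :
    Polynomial.derivative (lineRestriction a v F) =
      ∑ i, v i • lineRestriction a v (pderiv i F) := by
  classical
  induction F using MvPolynomial.induction_on with
  | C c => simp [lineRestriction]
  | add F G hF hG => simp [hF, hG, Finset.sum_add_distrib]
  | mul_X F e hF =>
    have hX : lineRestriction a v (X e) =
        Polynomial.C (a e) + Polynomial.C (v e) * Polynomial.X := aeval_X _ e
    have hsingle : ∑ i, v i • lineRestriction a v (F * pderiv i (X e)) =
        lineRestriction a v F * Polynomial.C (v e) := by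
      rw [Finset.sum_eq_single e]
      · simp [Polynomial.smul_eq_C_mul, mul_comm]
      · intro i _ hi
        simp [pderiv_X_of_ne hi.symm]
      · simp
    calc Polynomial.derivative (lineRestriction a v (F * X e))
        = Polynomial.derivative (lineRestriction a v F) * lineRestriction a v (X e) +
            lineRestriction a v F * Polynomial.C (v e) := by
          rw [map_mul, Polynomial.derivative_mul, hX]
          simp
      _ = ∑ i, v i • lineRestriction a v (pderiv i F * X e + F * pderiv i (X e)) := by
          rw [hF, ← hsingle, Finset.sum_mul, ← Finset.sum_add_distrib]
          simp only [map_add, map_mul, smul_add, smul_mul_assoc]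
      _ = _ := by
          simp only [Derivation.leibniz, smul_eq_mul, add_comm, mul_comm]

theorem coeff_zero_lineRestriction (a v : E → R) (F : MvPolynomial E R) :
    (lineRestriction a v F).coeff 0 = eval a F := by
  simp [Polynomial.coeff_zero_eq_eval_zero, eval_lineRestriction]

theorem coeff_one_lineRestriction [Fintype E] (a v : E → R) (F : MvPolynomial E R) :
    (lineRestriction a v F).coeff 1 = ∑ i, v i * eval a (pderiv i F) := by
  have hder := congrArg (Polynomial.coeff · 0) (derivative_lineRestriction a v F)
  simpa [Polynomial.coeff_derivative, Polynomial.finsetSum_coeff, coeff_zero_lineRestriction]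
    using hder

theorem two_mul_coeff_two_lineRestriction [Fintype E] (a v : E → R) (F : MvPolynomial E R) :
    2 * (lineRestriction a v F).coeff 2 =
      ∑ i, ∑ j, v i * v j * eval a (pderiv i (pderiv j F)) := by
  have hder := congrArg (Polynomial.coeff · 1) (derivative_lineRestriction a v F)
  simp only [Polynomial.coeff_derivative, Polynomial.finsetSum_coeff, Polynomial.coeff_smul,
    coeff_one_lineRestriction, smul_eq_mul, Finset.mul_sum] at hder
  rw [Finset.sum_comm]
  calc _ = (lineRestriction a v F).coeff (1 + 1) * ((1 : ℕ) + 1) := by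
        norm_num [mul_comm]
    _ = _ := hder
    _ = _ := Finset.sum_congr rfl fun j _ => Finset.sum_congr rfl fun i _ => by ring

end LineRestriction

section LogConcavityMatrix

variable {E R : Type*} [CommRing R]

theorem pderiv_pderiv_comm (i j : E) (F : MvPolynomial E R) :
    pderiv i (pderiv j F) = pderiv j (pderiv i F) := by
  classical
  have hbracket : ⁅(pderiv i : Derivation R (MvPolynomial E R) (MvPolynomial E R)),
      (pderiv j : Derivation R (MvPolynomial E R) (MvPolynomial E R))⁆ = 0 := by
    refine derivation_ext fun e => ?_
    simp only [Derivation.commutator_apply, pderiv_X, Pi.single_apply]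
    split_ifs <;> simp
  simpa [Derivation.commutator_apply, sub_eq_zero] using DFunLike.congr_fun hbracket F

/-- The matrix `-F · H_F + s · (∇F)ᵀ(∇F)` at `a`. Where `F > 0` and `s < 1`, it is positive
semidefinite exactly when the Hessian of `F ^ (1 - s)` is negative semidefinite. -/
noncomputable def logConcavityMatrix (F : MvPolynomial E R) (s : R) (a : E → R) : Matrix E E R :=
  Matrix.of fun i j => -(eval a F) * eval a (pderiv i (pderiv j F)) +
    s * (eval a (pderiv i F) * eval a (pderiv j F))

theorem isSymm_logConcavityMatrix (F : MvPolynomial E R) (s : R) (a : E → R) :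
    (logConcavityMatrix F s a).IsSymm := by
  ext i j
  simp only [logConcavityMatrix, Matrix.transpose_apply, Matrix.of_apply, pderiv_pderiv_comm j i,
    mul_comm (eval a (pderiv j F))]

theorem dotProduct_logConcavityMatrix_mulVec [Fintype E] (F : MvPolynomial E R) (s : R)
    (a v : E → R) :
    v ⬝ᵥ (logConcavityMatrix F s a *ᵥ v) =
      -((lineRestriction a v F).coeff 0 * (2 * (lineRestriction a v F).coeff 2)) +
        s * (lineRestriction a v F).coeff 1 ^ 2 := by
  rw [coeff_zero_lineRestriction, coeff_one_lineRestriction, two_mul_coeff_two_lineRestriction,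
    sq, Finset.sum_mul_sum]
  simp only [logConcavityMatrix, dotProduct, Matrix.mulVec, Matrix.of_apply,
    Finset.mul_sum, ← Finset.sum_neg_distrib, ← Finset.sum_add_distrib]
  exact Finset.sum_congr rfl fun i _ => Finset.sum_congr rfl fun j _ => by ring

end LogConcavityMatrix

section Determinants

variable {m : Type*} [Fintype m]

theorem sq_trace_le_card_mul_trace_mul_transpose (A : Matrix m m ℝ) :
    A.trace ^ 2 ≤ Fintype.card m * (A * Aᵀ).trace := by
  have hdiag (i : m) : A i i ^ 2 ≤ (A * Aᵀ) i i := by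
    simp only [Matrix.mul_apply, Matrix.transpose_apply, ← sq]
    exact Finset.single_le_sum (f := fun j => A i j ^ 2) (fun j _ => sq_nonneg _)
      (Finset.mem_univ i)
  calc A.trace ^ 2 ≤ Fintype.card m * ∑ i, A i i ^ 2 := sq_sum_le_card_mul_sum_sq
    _ ≤ Fintype.card m * (A * Aᵀ).trace := by
      gcongr
      exact Finset.sum_le_sum fun i _ => hdiag i

theorem one_sub_mul_sq_trace_lt_trace_mul_transpose {A : Matrix m m ℝ} (hA : A ≠ 0) {s : ℝ}
    (hs : ((Fintype.card m : ℝ) - 1) / Fintype.card m < s) :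
    (1 - s) * A.trace ^ 2 < (A * Aᵀ).trace := by
  have hnonneg : 0 ≤ (A * Aᵀ).trace := A.posSemidef_self_mul_conjTranspose.trace_nonneg
  have hpos : 0 < (A * Aᵀ).trace :=
    hnonneg.lt_of_ne' fun h => hA (Matrix.trace_mul_conjTranspose_self_eq_zero_iff.1 h)
  have hcard : (0 : ℝ) < Fintype.card m := by
    obtain ⟨i, -⟩ := Function.ne_iff.1 hA
    exact_mod_cast Fintype.card_pos_iff.2 ⟨i⟩
  rw [div_lt_iff₀ hcard] at hs
  rcases le_or_gt s 1 with h | h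
  · calc (1 - s) * A.trace ^ 2 ≤ (1 - s) * (Fintype.card m * (A * Aᵀ).trace) :=
          mul_le_mul_of_nonneg_left (sq_trace_le_card_mul_trace_mul_transpose A) (sub_nonneg.2 h)
      _ = (1 - s) * Fintype.card m * (A * Aᵀ).trace := by ring
      _ < (A * Aᵀ).trace := mul_lt_of_lt_one_left hpos (by linarith)
  · exact (mul_nonpos_of_nonpos_of_nonneg (by linarith) (sq_nonneg _)).trans_lt hpos

variable [DecidableEq m] {R : Type*} [CommRing R]

theorem det_one_add_X_smul_mul_det_one_add_X_smul_neg (A : Matrix m m R) :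
    (1 + (Polynomial.X : Polynomial R) • A.map Polynomial.C).det *
        (1 + (Polynomial.X : Polynomial R) • (-A).map Polynomial.C).det =
      Polynomial.expand R 2
        (1 + (Polynomial.X : Polynomial R) • (-(A * A)).map Polynomial.C).det := by
  have hmap (B : Matrix m m R) :
      (Polynomial.expand R 2).mapMatrix (1 + (Polynomial.X : Polynomial R) • B.map Polynomial.C) =
        1 + (Polynomial.X ^ 2 : Polynomial R) • B.map Polynomial.C := by
    ext1 i j
    simp [Matrix.one_apply, apply_ite]
  have hneg (B : Matrix m m R) : (-B).map Polynomial.C = -B.map Polynomial.C := by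
    ext1 i j
    simp
  rw [← Matrix.det_mul, AlgHom.map_det, hmap, hneg, hneg, Matrix.map_mul]
  congr 1
  simp only [add_mul, mul_add, one_mul, mul_one, smul_neg, mul_neg, smul_mul_smul_comm,
    ← sq (Polynomial.X : Polynomial R)]
  abel

theorem coeff_zero_det_one_add_X_smul (A : Matrix m m R) :
    (1 + (Polynomial.X : Polynomial R) • A.map Polynomial.C).det.coeff 0 = 1 := by
  rw [Polynomial.coeff_zero_eq_eval_zero, eval_det_add_X_smul, Matrix.det_one, Polynomial.eval_one]

theorem coeff_two_det_one_add_X_smul_neg (A : Matrix m m R) :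
    (1 + (Polynomial.X : Polynomial R) • (-A).map Polynomial.C).det.coeff 2 =
      (1 + (Polynomial.X : Polynomial R) • A.map Polynomial.C).det.coeff 2 := by
  rw [Matrix.coeff_det_one_add_X_smul_eq_sum_minors, Matrix.coeff_det_one_add_X_smul_eq_sum_minors]
  refine Finset.sum_congr rfl fun S hS => ?_
  calc ((-A).submatrix _ _).det = (-(A.submatrix (Subtype.val : S → m) Subtype.val)).det := rfl
    _ = _ := by
      rw [Matrix.det_neg, Fintype.card_coe, (Finset.mem_powersetCard.1 hS).2, neg_one_sq, one_mul]

theorem two_mul_coeff_two_det_one_add_X_smul (A : Matrix m m R) :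
    2 * (1 + (Polynomial.X : Polynomial R) • A.map Polynomial.C).det.coeff 2 =
      A.trace ^ 2 - (A * A).trace := by
  have hcoeff := congrArg (Polynomial.coeff · 2) (det_one_add_X_smul_mul_det_one_add_X_smul_neg A)
  have hexpand := Polynomial.coeff_expand_mul (p := 2) two_pos
    (1 + (Polynomial.X : Polynomial R) • (-(A * A)).map Polynomial.C).det 1
  rw [one_mul] at hexpand
  simp only [hexpand, Polynomial.coeff_mul, Finset.Nat.sum_antidiagonal_eq_sum_range_succ_mk,
    Finset.sum_range_succ, Finset.sum_range_zero, Nat.sub_zero, Nat.sub_self, Nat.add_one_sub_one,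
    coeff_zero_det_one_add_X_smul, Matrix.coeff_det_one_add_X_smul_one,
    coeff_two_det_one_add_X_smul_neg, Matrix.trace_neg] at hcoeff
  linear_combination hcoeff

theorem det_add_smul_transpose_mul_mul (B A : Matrix m m R) (t : R) :
    (Bᵀ * B + t • (Bᵀ * A * B)).det = B.det ^ 2 * (1 + t • A).det := by
  have hfactor : Bᵀ * B + t • (Bᵀ * A * B) = Bᵀ * (1 + t • A) * B := by
    simp [Matrix.mul_add, Matrix.add_mul]
  rw [hfactor, Matrix.det_mul, Matrix.det_mul, Matrix.det_transpose]
  ring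

open scoped MatrixOrder Matrix.Norms.L2Operator in
theorem exists_isUnit_eq_transpose_mul_self {M : Matrix m m ℝ} (hM : M.PosDef) :
    ∃ B : Matrix m m ℝ, IsUnit B ∧ M = Bᵀ * B := by
  obtain ⟨B, hB⟩ := CStarAlgebra.nonneg_iff_eq_star_mul_self.1 hM.posSemidef.nonneg
  exact ⟨B, isUnit_of_mul_isUnit_right (hB ▸ hM.isUnit :), hB⟩

theorem exists_isSymm_eq_transpose_mul_mul {B M : Matrix m m R} (hB : IsUnit B)
    (hM : M.IsSymm) : ∃ A : Matrix m m R, A.IsSymm ∧ M = Bᵀ * A * B := by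
  have hdet : IsUnit B.det := (Matrix.isUnit_iff_isUnit_det B).1 hB
  refine ⟨B⁻¹ᵀ * M * B⁻¹, by simp [Matrix.IsSymm, Matrix.mul_assoc, hM.eq], ?_⟩
  calc M = (B⁻¹ * B)ᵀ * M * (B⁻¹ * B) := by simp [Matrix.nonsing_inv_mul B hdet]
    _ = Bᵀ * (B⁻¹ᵀ * M * B⁻¹) * B := by simp only [Matrix.transpose_mul, Matrix.mul_assoc]

end Determinants

theorem posDef_logConcavityMatrix_of_eval_eq_det {E m : Type*} [Finite E] [Fintype m]
    [DecidableEq m] {F : MvPolynomial E ℝ} (L : (E → ℝ) →ₗ[ℝ] Matrix m m ℝ)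
    (hinj : Function.Injective L) (hsymm : ∀ x, (L x).IsSymm)
    (hF : ∀ x, eval x F = (L x).det) {a : E → ℝ} (ha : (L a).PosDef) {s : ℝ}
    (hs : ((Fintype.card m : ℝ) - 1) / Fintype.card m < s) : (logConcavityMatrix F s a).PosDef := by
  have := Fintype.ofFinite E
  refine Matrix.PosDef.of_dotProduct_mulVec_pos
    (Matrix.isHermitian_iff_isSymm.2 (isSymm_logConcavityMatrix F s a)) fun v hv => ?_
  obtain ⟨B, hB, hLa⟩ := exists_isUnit_eq_transpose_mul_self ha
  obtain ⟨A, hA, hLv⟩ := exists_isSymm_eq_transpose_mul_mul hB (hsymm v)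
  have hA0 : A ≠ 0 := by
    rintro rfl
    exact hv (hinj (by simpa using hLv))
  have hline : lineRestriction a v F = Polynomial.C (B.det ^ 2) *
      (1 + (Polynomial.X : Polynomial ℝ) • A.map Polynomial.C).det := by
    refine Polynomial.funext fun t => ?_
    rw [eval_lineRestriction, hF, map_add, map_smul, hLa, hLv, det_add_smul_transpose_mul_mul]
    simp [eval_det, ← Matrix.smul_eq_mul_diagonal]
  have htrace := one_sub_mul_sq_trace_lt_trace_mul_transpose hA0 hs
  rw [hA.eq] at htrace
  have hdet : 0 < B.det ^ 2 :=
    sq_pos_of_ne_zero ((Matrix.isUnit_iff_isUnit_det B).1 hB).ne_zero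
  calc 0 < (B.det ^ 2) ^ 2 * ((A * A).trace - (1 - s) * A.trace ^ 2) :=
        mul_pos (pow_pos hdet 2) (sub_pos.2 htrace)
    _ = v ⬝ᵥ (logConcavityMatrix F s a *ᵥ v) := by
        rw [dotProduct_logConcavityMatrix_mulVec, hline]
        simp only [Polynomial.coeff_C_mul, coeff_zero_det_one_add_X_smul,
          Matrix.coeff_det_one_add_X_smul_one]
        linear_combination (B.det ^ 2) ^ 2 * two_mul_coeff_two_det_one_add_X_smul A

/-- for a finite connected simple graph `Γ` with `r + 1 ≥ 3` vertices and
`n ≥ 3` edges, for every spanning tree `T`, every point `a` of the cone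
`C^n_{T>0} = { a ∈ ℝ^n_{≥0} : a_e > 0 for e ∈ T }`, and every `s > (r-1)/r`, the matrix
`-F·H_F + s·(∇F)ᵀ(∇F)` evaluated at `a` is positive definite. -/
theorem kirchhoff_strictly_homog_logConcave_on_cone
    {V : Type} [Fintype V] [DecidableEq V] (G : SimpleGraph V) [Fintype G.edgeSet]
    (hconn : G.Connected) (r n : ℕ)
    (hV : Fintype.card V = r + 1) (hr : 3 ≤ r + 1)
    (hE : Fintype.card G.edgeSet = n) (hn : 3 ≤ n)
    (T : Finset G.edgeSet) (hT : IsSpanningTree G T)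
    (a : G.edgeSet → ℝ) (ha0 : ∀ e, 0 ≤ a e) (haT : ∀ e ∈ T, 0 < a e)
    (s : ℝ) (hs : ((r : ℝ) - 1) / (r : ℝ) < s) :
    (Matrix.of fun i j : G.edgeSet =>
        -(eval a (kirchhoff G)) * eval a (pderiv i (pderiv j (kirchhoff G)))
          + s * (eval a (pderiv i (kirchhoff G)) * eval a (pderiv j (kirchhoff G)))).PosDef := by
  obtain ⟨v₀⟩ := hconn.nonempty
  have hcard : Fintype.card {v // v ≠ v₀} = r := by
    simp [Fintype.card_subtype_compl, hV]
  have ha : (reducedLaplacian G v₀ a).PosDef :=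
    (posSemidef_reducedLaplacian G v₀ ha0).posDef_iff_det_ne_zero.2
      (eval_kirchhoff G v₀ a ▸ (eval_kirchhoff_pos hT ha0 haT).ne')
  exact posDef_logConcavityMatrix_of_eval_eq_det (reducedLaplacian G v₀)
    (reducedLaplacian_injective G v₀) (isSymm_reducedLaplacian G v₀) (eval_kirchhoff G v₀) ha
    (by rwa [hcard])
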